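/- Let Π be a group, g ∈ Π, and Γ ≤ Π a subgroup of finite index N. Let g_Γ be the permutation of the right-coset set Γ\Π induced by right multiplication by g, and suppose g_Γ has cycles of lengths l₁, …, l_d (so l₁ + ⋯ + l_d = N). Then the geometric determinant of 1 − g_Γ acting on ℂ[Γ\Π] equals ∏_{j=1}^d l_j, and consequently det'(1 − g_Γ) ≤ (N/d)^d. -/

import Mathlib

open Module MulAction

/-- The geometric determinant `det'(f)`: the product of the nonzero singular values of `f`. -/
noncomputable def detp {𝕜 E F : Type*} [RCLike 𝕜] [NormedAddCommGroup E] [InnerProductSpace 𝕜 E]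
    [NormedAddCommGroup F] [InnerProductSpace 𝕜 F] [FiniteDimensional 𝕜 E] [FiniteDimensional 𝕜 F]
    (f : E →ₗ[𝕜] F) : ℝ :=
  have hT : (LinearMap.adjoint f ∘ₗ f).IsSymmetric := fun x y => by
    simp only [LinearMap.comp_apply, LinearMap.adjoint_inner_left, LinearMap.adjoint_inner_right]
  ∏ i : Fin (finrank 𝕜 E),
    if hT.eigenvalues rfl i = 0 then 1 else Real.sqrt (hT.eigenvalues rfl i)

/-- The unitary operator on `ℂ[R]` induced by a group element `g` acting on a finite set `R`. -/
noncomputable def permOp (G R : Type*) [Group G] [MulAction G R] [Fintype R] (g : G) :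
    EuclideanSpace ℂ R →ₗ[ℂ] EuclideanSpace ℂ R :=
  (WithLp.linearEquiv 2 ℂ (R → ℂ)).symm.toLinearMap ∘ₗ
    LinearMap.funLeft ℂ ℂ (fun r => g⁻¹ • r) ∘ₗ
    (WithLp.linearEquiv 2 ℂ (R → ℂ)).toLinearMap



lemma detp_eq_aux {E F ι : Type*} [NormedAddCommGroup E] [InnerProductSpace ℂ E]
    [NormedAddCommGroup F] [InnerProductSpace ℂ F] [FiniteDimensional ℂ E] [FiniteDimensional ℂ F]
    [Fintype ι] (f : E →ₗ[ℂ] F) (e : E ≃ₗ[ℂ] (ι → ℂ)) (μ : ι → ℝ)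
    (h : ∀ x i, e (LinearMap.adjoint f (f x)) i = (μ i : ℂ) * e x i) :
    detp f = ∏ i, if μ i = 0 then 1 else Real.sqrt (μ i) := by
  classical
  have hT : (LinearMap.adjoint f ∘ₗ f).IsSymmetric := fun x y => by
    simp only [LinearMap.comp_apply, LinearMap.adjoint_inner_left, LinearMap.adjoint_inner_right]
  have h1 := hT.roots_charpoly_eq_eigenvalues rfl
  have h2 : e.conj (LinearMap.adjoint f ∘ₗ f) =
      (Matrix.diagonal (fun i => (μ i : ℂ))).toLin' := by
    apply LinearMap.ext
    intro x
    funext i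
    rw [LinearEquiv.conj_apply_apply, LinearMap.comp_apply, h]
    simp [Matrix.toLin'_apply, Matrix.mulVec_diagonal]
  rw [← LinearEquiv.charpoly_conj e, h2, Matrix.charpoly_toLin', Matrix.charpoly_diagonal,
    Polynomial.roots_prod _ _ (by
      simp [Finset.prod_ne_zero_iff, Polynomial.X_sub_C_ne_zero])] at h1
  have h3 := congrArg (fun s => (s.map (fun z : ℂ => if z.re = 0 then (1 : ℝ)
    else Real.sqrt z.re)).prod) h1
  simp only [Polynomial.roots_X_sub_C, Multiset.bind_singleton, Multiset.map_map] at h3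
  unfold detp
  simpa [List.prod_ofFn] using h3.symm

lemma prod_norm_aux (n : ℕ) [NeZero n] :
    (∏ k : ZMod n, if ‖1 - ZMod.stdAddChar k‖ ^ 2 = 0 then (1 : ℝ)
      else Real.sqrt (‖1 - ZMod.stdAddChar k‖ ^ 2)) = n := by
  obtain ⟨m, rfl⟩ := Nat.exists_eq_succ_of_ne_zero (NeZero.ne n)
  have hζ := Complex.isPrimitiveRoot_exp (m + 1) (Nat.succ_ne_zero m)
  have hχ : ∀ j : ℕ, ZMod.stdAddChar ((j : ℕ) : ZMod (m + 1)) =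
      Complex.exp (2 * Real.pi * Complex.I / (m + 1 : ℕ)) ^ j := by
    intro j
    have := ZMod.stdAddChar_coe (N := m + 1) (j : ℤ)
    rw [Int.cast_natCast] at this
    rw [this, ← Complex.exp_nat_mul]
    congr 1
    push_cast
    ring
  have hprod := hζ.prod_one_sub_pow_eq_order
  have key : ∀ F : ZMod (m + 1) → ℝ, ∏ k, F k = ∏ j ∈ Finset.range (m + 1), F (j : ZMod (m + 1)) := by
    intro F
    rw [← Fin.prod_univ_eq_prod_range (fun j => F (j : ZMod (m + 1)))]
    refine Finset.prod_congr rfl fun k _ => ?_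
    congr 1
    exact (Fin.cast_val_eq_self k).symm
  refine (key _).trans ?_
  rw [Finset.prod_range_succ']
  have : (((m.succ : ℕ) : ℝ)) = ‖(m + 1 : ℂ)‖ := by
    rw [← Nat.cast_succ, Complex.norm_natCast]
  rw [this, ← hprod, norm_prod]
  simp only [Nat.cast_zero, AddChar.map_zero_eq_one, sub_self, norm_zero]
  rw [if_pos (by norm_num), mul_one]
  refine Finset.prod_congr rfl fun j hj => ?_
  rw [hχ (j + 1), Real.sqrt_sq (norm_nonneg _), if_neg]
  have hne : 1 - Complex.exp (2 * Real.pi * Complex.I / (m + 1 : ℕ)) ^ (j + 1) ≠ 0 := by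
    rw [sub_ne_zero]
    exact (hζ.pow_ne_one_of_pos_of_lt (Nat.succ_ne_zero j)
      (by simpa using Finset.mem_range.1 hj)).symm
  positivity

lemma dft_shift_aux (n : ℕ) [NeZero n] (y : ZMod n → ℂ) (a k : ZMod n) :
    ZMod.dft (fun j => y (j + a)) k = ZMod.stdAddChar (a * k) * ZMod.dft y k := by
  rw [ZMod.dft_apply, ZMod.dft_apply, Finset.mul_sum,
    ← Equiv.sum_comp (Equiv.addRight a)
      (fun j => ZMod.stdAddChar (a * k) * (ZMod.stdAddChar (-(j * k)) • y j))]
  refine Finset.sum_congr rfl fun j _ => ?_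
  simp only [Equiv.coe_addRight, smul_eq_mul]
  rw [← mul_assoc, ← AddChar.map_add_eq_mul]
  congr 2
  ring

section
variable {G : Type*} [Group G] (Γ : Subgroup G) [Fintype (G ⧸ Γ)] (g : G)

abbrev OIdx := Σ q : orbitRel.Quotient (Subgroup.zpowers g) (G ⧸ Γ),
  ZMod (Function.minimalPeriod (g • ·) q.out)

noncomputable def fourierE : EuclideanSpace ℂ (G ⧸ Γ) ≃ₗ[ℂ] (OIdx Γ g → ℂ) :=
  (WithLp.linearEquiv 2 ℂ ((G ⧸ Γ) → ℂ)) ≪≫ₗ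
    LinearEquiv.funCongrLeft ℂ ℂ (Subgroup.quotientEquivSigmaZMod Γ g).symm ≪≫ₗ
    LinearEquiv.piCurry ℂ (fun _ _ => ℂ) ≪≫ₗ
    LinearEquiv.piCongrRight (fun _ => ZMod.dft) ≪≫ₗ
    (LinearEquiv.piCurry ℂ (fun _ _ => ℂ)).symm

lemma fourierE_apply (x : EuclideanSpace ℂ (G ⧸ Γ)) (i : OIdx Γ g) :
    fourierE Γ g x i =
      ZMod.dft (fun j => x ((Subgroup.quotientEquivSigmaZMod Γ g).symm ⟨i.1, j⟩)) i.2 := rfl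

lemma zpow_equiv_aux (q : orbitRel.Quotient (Subgroup.zpowers g) (G ⧸ Γ)) (a : ℤ)
    (j : ZMod (Function.minimalPeriod (g • ·) q.out)) :
    g ^ a • (Subgroup.quotientEquivSigmaZMod Γ g).symm ⟨q, j⟩ =
      (Subgroup.quotientEquivSigmaZMod Γ g).symm ⟨q, j + a⟩ := by
  rw [Equiv.eq_symm_apply, Subgroup.quotientEquivSigmaZMod_symm_apply, smul_smul, ← zpow_add,
    Subgroup.quotientEquivSigmaZMod_apply]
  congr 1
  push_cast
  rw [add_comm]

lemma fourierE_permOp (a : ℤ) (x : EuclideanSpace ℂ (G ⧸ Γ)) (i : OIdx Γ g) :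
    fourierE Γ g (permOp G (G ⧸ Γ) (g ^ a) x) i =
      ZMod.stdAddChar (-(a : ZMod (Function.minimalPeriod (g • ·) i.1.out)) * i.2)
        * fourierE Γ g x i := by
  rw [fourierE_apply, fourierE_apply, ← dft_shift_aux]
  refine congrFun (congrArg ZMod.dft ?_) i.2
  funext j
  have := zpow_equiv_aux Γ g i.1 (-a) j
  push_cast at this
  rw [← this, zpow_neg]
  rfl

lemma permOp_adjoint : LinearMap.adjoint (permOp G (G ⧸ Γ) g) = permOp G (G ⧸ Γ) g⁻¹ := by
  symm
  rw [LinearMap.eq_adjoint_iff]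
  intro x y
  simp only [PiLp.inner_apply]
  rw [← Equiv.sum_comp (MulAction.toPerm g)
    (fun i => inner ℂ (x i) ((permOp G (G ⧸ Γ) g) y i))]
  refine Finset.sum_congr rfl fun r _ => ?_
  simp [permOp, LinearMap.funLeft]

lemma detp_aux [Fintype (orbitRel.Quotient (Subgroup.zpowers g) (G ⧸ Γ))] :
     detp (LinearMap.id - permOp G (G ⧸ Γ) g) =
    ∏ i : OIdx Γ g, if ‖1 - ZMod.stdAddChar i.2‖ ^ 2 = 0 then (1 : ℝ)
      else Real.sqrt (‖1 - ZMod.stdAddChar i.2‖ ^ 2) := by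
  apply detp_eq_aux _ (fourierE Γ g) (fun i => ‖1 - ZMod.stdAddChar i.2‖ ^ 2)
  intro x i
  have h1 := fun x => fourierE_permOp Γ g 1 x i
  have h2 := fun x => fourierE_permOp Γ g (-1) x i
  simp only [zpow_one, zpow_neg, Int.cast_one, Int.cast_neg, neg_neg, one_mul, neg_mul] at h1 h2
  have hid : LinearMap.adjoint (LinearMap.id : EuclideanSpace ℂ (G ⧸ Γ) →ₗ[ℂ] _) =
      LinearMap.id := by
    symm
    rw [LinearMap.eq_adjoint_iff]
    intro x y
    rfl
  rw [map_sub, hid, permOp_adjoint]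
  simp only [LinearMap.sub_apply, LinearMap.id_apply, map_sub, Pi.sub_apply, h1, h2]
  have h3 : ((‖1 - ZMod.stdAddChar i.2‖ ^ 2 : ℝ) : ℂ) =
      (1 - ZMod.stdAddChar i.2) * (1 - ZMod.stdAddChar (-i.2)) := by
    rw [AddChar.map_neg_eq_conj]
    push_cast
    rw [← Complex.mul_conj']
    simp
  rw [h3]
  ring

end

theorem stmt15 {G : Type*} [Group G] (Γ : Subgroup G) [Fintype (G ⧸ Γ)] (g : G)
    (N : ℕ) (hN : Nat.card (G ⧸ Γ) = N)
    -- the number of cycles of the permutation `g_Γ` of the coset space, i.e. the number of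
    -- orbits of `⟨g⟩` acting on `G ⧸ Γ`:
    (d : ℕ) (hd : d = Nat.card (orbitRel.Quotient (Subgroup.zpowers g) (G ⧸ Γ))) :
    detp (LinearMap.id - permOp G (G ⧸ Γ) g) =
        ∏ᶠ ω : orbitRel.Quotient (Subgroup.zpowers g) (G ⧸ Γ), (Nat.card ω.orbit : ℝ) ∧
      detp (LinearMap.id - permOp G (G ⧸ Γ) g) ≤ ((N : ℝ) / d) ^ d := by
  classical
  have : Fintype (orbitRel.Quotient (Subgroup.zpowers g) (G ⧸ Γ)) := Fintype.ofFinite _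
  have hcard : ∀ ω : orbitRel.Quotient (Subgroup.zpowers g) (G ⧸ Γ),
      Nat.card ω.orbit = Function.minimalPeriod (g • ·) ω.out := by
    intro ω
    rw [orbitRel.Quotient.orbit_eq_orbit_out ω Quotient.out_eq']
    exact (Nat.card_congr (orbitZPowersEquiv g ω.out)).trans (Nat.card_zmod _)
  have h1 : detp (LinearMap.id - permOp G (G ⧸ Γ) g) =
      ∏ ω : orbitRel.Quotient (Subgroup.zpowers g) (G ⧸ Γ), (Nat.card ω.orbit : ℝ) := by
    rw [detp_aux]
    refine Eq.trans (Fintype.prod_sigma _) ?_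
    refine Finset.prod_congr rfl fun ω _ => ?_
    rw [hcard]
    exact prod_norm_aux _
  refine ⟨by rw [finprod_eq_prod_of_fintype, h1], ?_⟩
  have hsum : ∑ ω : orbitRel.Quotient (Subgroup.zpowers g) (G ⧸ Γ), (Nat.card ω.orbit : ℝ) = N := by
    have := Subgroup.index_eq_sum_minimalPeriod Γ g
    rw [← hN]
    simp only [hcard]
    rw [← Nat.cast_sum]
    exact congrArg _ this.symm
  have hne : Nonempty (orbitRel.Quotient (Subgroup.zpowers g) (G ⧸ Γ)) :=
    ⟨Quotient.mk'' ((1 : G) : G ⧸ Γ)⟩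
  rw [Nat.card_eq_fintype_card] at hd
  have hdpos : (0 : ℝ) < d := by
    rw [hd]
    exact_mod_cast Fintype.card_pos
  have hd0 : d ≠ 0 := by
    rintro rfl
    simp at hdpos
  have hag := Real.geom_mean_le_arith_mean Finset.univ
    (fun _ : orbitRel.Quotient (Subgroup.zpowers g) (G ⧸ Γ) => (1 : ℝ))
    (fun ω => (Nat.card ω.orbit : ℝ)) (by simp) (by simpa [← hd] using hdpos) (by simp)
  simp only [Real.rpow_one, one_mul, hsum, Finset.sum_const, Finset.card_univ, ← hd,
    nsmul_eq_mul, mul_one, ← h1] at hag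
  have h0 : 0 ≤ detp (LinearMap.id - permOp G (G ⧸ Γ) g) := by
    rw [h1]
    positivity
  calc _ = (detp (LinearMap.id - permOp G (G ⧸ Γ) g) ^ ((d : ℝ)⁻¹)) ^ d :=
        (Real.rpow_inv_natCast_pow h0 hd0).symm
    _ ≤ _ := by gcongr
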